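/- Let D be a unique factorization domain, let a, b, c ∈ D with gcd(a,b) = 1, and let Ψ : D[x₁] → D[x₁,x₂] be the D-algebra homomorphism with Ψ(x₁) = a·x₁ + b·x₂ + c. If f ∈ D[x₁] is primitive (the only elements of D dividing all coefficients of f are units), then the greatest common divisor in D of the coefficients of Ψ(f) ∈ D[x₁,x₂] is 1, i.e. Ψ(f) is primitive over D. -/

import Mathlib

/-!
Setting one of the two variables of `Ψ(f)` to `0` gives `f(a·x + c)` and `f(b·x + c)`. If
`f(x + c) = ∑ gₙ xⁿ`, these have coefficients `aⁿ gₙ` and `bⁿ gₙ`, so a constant `r` dividing `Ψ(f)`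
divides both, hence divides `gₙ` because `aⁿ` and `bⁿ` are relatively prime. Thus `r` divides
`f(x + c)`, and translating back, `r` divides `f`.
-/

theorem dvd_of_dvd_mul_of_dvd_mul_of_isRelPrime {M : Type*} [CommMonoidWithZero M]
    [IsCancelMulZero M] [DecompositionMonoid M] {a b r t : M} (hab : IsRelPrime a b)
    (ha : r ∣ a * t) (hb : r ∣ b * t) : r ∣ t := by
  obtain ⟨s, u, hsa, ⟨t', rfl⟩, rfl⟩ := exists_dvd_and_dvd_of_dvd_mul ha
  obtain rfl | hu := eq_or_ne u 0
  · simp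
  have hsb : s ∣ b * t' := by
    rwa [mul_comm s u, mul_left_comm b u t', mul_dvd_mul_iff_left hu] at hb
  have hst : s ∣ t' := (hab.of_dvd_left hsa).dvd_of_dvd_mul_left hsb
  rw [mul_comm u t']
  exact mul_dvd_mul_right hst u

namespace LinearSubst

open Polynomial

theorem comp_linear_eq_taylor_comp {R : Type*} [CommSemiring R] (a c : R) (f : R[X]) :
    f.comp (C a * X + C c) = (taylor c f).comp (C a * X) := by
  rw [taylor_apply, comp_assoc, add_comp, X_comp, C_comp]

theorem C_dvd_comp_linear_iff {R : Type*} [CommSemiring R] {a c r : R} {f : R[X]} :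
    C r ∣ f.comp (C a * X + C c) ↔ ∀ n, r ∣ a ^ n * (taylor c f).coeff n := by
  simp only [comp_linear_eq_taylor_comp, C_dvd_iff_dvd_coeff, comp_C_mul_X_coeff, mul_comm (a ^ _)]

theorem C_dvd_taylor_iff {R : Type*} [CommRing R] {c r : R} {f : R[X]} :
    C r ∣ taylor c f ↔ C r ∣ f := by
  have h : taylorEquiv c (C r) = C r := taylor_C c r
  rw [← map_dvd_iff (taylorEquiv c) (b := f), h]
  rfl

theorem C_dvd_of_C_dvd_comp_linear {R : Type*} [CommRing R] [IsCancelMulZero R]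
    [DecompositionMonoid R] {a b c r : R} {f : R[X]} (hab : IsRelPrime a b)
    (ha : C r ∣ f.comp (C a * X + C c)) (hb : C r ∣ f.comp (C b * X + C c)) : C r ∣ f := by
  rw [C_dvd_comp_linear_iff] at ha hb
  rw [← C_dvd_taylor_iff (c := c), C_dvd_iff_dvd_coeff]
  exact fun n ↦ dvd_of_dvd_mul_of_dvd_mul_of_isRelPrime hab.pow (ha n) (hb n)

theorem algebraMap_dvd_aeval_aeval_of_C_dvd_eval₂ {R σ A : Type*} [CommSemiring R]
    [CommSemiring A] [Algebra R A] {r : R} {g : MvPolynomial σ R} {f : R[X]}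
    (h : MvPolynomial.C r ∣ f.eval₂ MvPolynomial.C g) (v : σ → A) :
    algebraMap R A r ∣ aeval (MvPolynomial.aeval v g) f := by
  rw [aeval_algHom_apply, ← MvPolynomial.aeval_C v r]
  exact map_dvd (MvPolynomial.aeval v) h

theorem C_dvd_of_C_dvd_eval₂_linear {R : Type*} [CommRing R] [IsCancelMulZero R]
    [DecompositionMonoid R] {a b c r : R} {f : R[X]} (hab : IsRelPrime a b)
    (h : (MvPolynomial.C r : MvPolynomial (Fin 2) R) ∣ f.eval₂ MvPolynomial.C
      (MvPolynomial.C a * MvPolynomial.X 0 + MvPolynomial.C b * MvPolynomial.X 1 +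
        MvPolynomial.C c)) : C r ∣ f := by
  have ha : C r ∣ f.comp (C a * X + C c) := by
    simpa [comp_eq_aeval] using algebraMap_dvd_aeval_aeval_of_C_dvd_eval₂ h ![(X : R[X]), 0]
  have hb : C r ∣ f.comp (C b * X + C c) := by
    simpa [comp_eq_aeval] using algebraMap_dvd_aeval_aeval_of_C_dvd_eval₂ h ![0, (X : R[X])]
  exact C_dvd_of_C_dvd_comp_linear hab ha hb

end LinearSubst

theorem primitive_of_linear_subst_general (D : Type*) [CommRing D] [IsDomain D]
    [DecompositionMonoid D] (a b c : D) (hab : IsRelPrime a b)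
    (f : Polynomial D) (hf : ∀ r : D, (∀ i, r ∣ f.coeff i) → IsUnit r) :
    ∀ r : D,
      (∀ m, r ∣ (Polynomial.eval₂ MvPolynomial.C
          (MvPolynomial.C a * MvPolynomial.X 0 + MvPolynomial.C b * MvPolynomial.X 1 +
            MvPolynomial.C c) f : MvPolynomial (Fin 2) D).coeff m) →
      IsUnit r := by
  intro r hr
  have hrf : Polynomial.C r ∣ f :=
    LinearSubst.C_dvd_of_C_dvd_eval₂_linear hab ((MvPolynomial.C_dvd_iff_dvd_coeff r _).2 hr)
  exact hf r ((Polynomial.C_dvd_iff_dvd_coeff r f).1 hrf)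

/-- Let `D` be a UFD, `a, b, c ∈ D` with `gcd(a,b) = 1`, and let
`Ψ : D[x₁] → D[x₁,x₂]` be the `D`-algebra homomorphism `x₁ ↦ a·x₁ + b·x₂ + c`. If
`f ∈ D[x₁]` is primitive, then `Ψ(f)` is primitive over `D` (the only elements of `D`
dividing all coefficients of `Ψ(f)` are units). -/
theorem primitive_of_linear_subst (D : Type*) [CommRing D] [IsDomain D]
    [UniqueFactorizationMonoid D] (a b c : D) (hab : IsRelPrime a b)
    (f : Polynomial D) (hf : ∀ r : D, (∀ i, r ∣ f.coeff i) → IsUnit r) :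
    ∀ r : D,
      (∀ m, r ∣ (Polynomial.eval₂ MvPolynomial.C
          (MvPolynomial.C a * MvPolynomial.X 0 + MvPolynomial.C b * MvPolynomial.X 1 +
            MvPolynomial.C c) f : MvPolynomial (Fin 2) D).coeff m) →
      IsUnit r :=
  primitive_of_linear_subst_general D a b c hab f hf
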